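/- Let T be a triangulation of an unpunctured disc with N marked points, and for distinct vertices i, j let (i,j) be the Conway–Coxeter frieze entry. Then (i,j) equals the number of matchings between T and the vertex set {i+1,...,j-1} (clockwise), and also equals the number of matchings between T and {j+1,...,i-1}; in particular (i,j) = (j,i). -/

import Mathlib

noncomputable section
open scoped Classical

namespace Frieze

/-- Vertices of the disc with `N` marked points, labelled clockwise. -/
abbrev Vx (N : ℕ) := ZMod N

/-- `Btw a x b` : `x` lies strictly between `a` and `b`, going clockwise. -/
def Btw {N : ℕ} (a x b : Vx N) : Prop :=
  0 < (x - a).val ∧ (x - a).val < (b - a).val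

/-- A valid diagonal (arc) of the unpunctured disc: endpoints distinct and non-adjacent. -/
def IsDiag (N : ℕ) (p : Vx N × Vx N) : Prop :=
  p.2 ≠ p.1 ∧ p.2 ≠ p.1 + 1 ∧ p.1 ≠ p.2 + 1

/-- Two chords cross iff their endpoints strictly interleave in the cyclic order. -/
def DCross {N : ℕ} (p q : Vx N × Vx N) : Prop :=
  (Btw p.1 q.1 p.2 ∧ Btw p.2 q.2 p.1) ∨ (Btw p.1 q.2 p.2 ∧ Btw p.2 q.1 p.1)

/-- A triangulation of the unpunctured disc with `N` marked points:
a maximal collection of pairwise noncrossing diagonals (each recorded once). -/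
structure Triang (N : ℕ) where
  diag : Finset (Vx N × Vx N)
  valid : ∀ p ∈ diag, IsDiag N p
  nodupSym : ∀ p ∈ diag, (p.2, p.1) ∉ diag
  noncross : ∀ p ∈ diag, ∀ q ∈ diag, ¬ DCross p q
  maximal : ∀ p, IsDiag N p → (∀ q ∈ diag, ¬ DCross p q) → p ∈ diag ∨ (p.2, p.1) ∈ diag

/-- The unordered diagonal `{a,b}` belongs to `T`. -/
def MemD {N : ℕ} (T : Triang N) (a b : Vx N) : Prop :=
  (a, b) ∈ T.diag ∨ (b, a) ∈ T.diag

/-- The segment from `a` to `a + d` (going `d` steps clockwise) can be a side of a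
triangle: it is a boundary edge (`d = 1`) or a diagonal of `T`. -/
def USide {N : ℕ} (T : Triang N) (a : Vx N) (d : ℕ) : Prop :=
  d = 1 ∨ MemD T a (a + (d : Vx N))

/-- `(a, p, q)` encodes the triangle with vertices `a`, `a+p`, `a+p+q` (clockwise);
the canonicity condition (`a` carries the smallest label) makes each triangle of
the triangulation be recorded exactly once. -/
def IsUTri {N : ℕ} (T : Triang N) (t : Vx N × ℕ × ℕ) : Prop :=
  1 ≤ t.2.1 ∧ 1 ≤ t.2.2 ∧ t.2.1 + t.2.2 ≤ N - 1 ∧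
  USide T t.1 t.2.1 ∧ USide T (t.1 + (t.2.1 : Vx N)) t.2.2 ∧
  USide T (t.1 + ((t.2.1 + t.2.2 : ℕ) : Vx N)) (N - t.2.1 - t.2.2) ∧
  t.1.val < (t.1 + (t.2.1 : Vx N)).val ∧ t.1.val < (t.1 + ((t.2.1 + t.2.2 : ℕ) : Vx N)).val

/-- Incidence of a vertex with a triangle. -/
def UInc {N : ℕ} (v : Vx N) (t : Vx N × ℕ × ℕ) : Prop :=
  v = t.1 ∨ v = t.1 + (t.2.1 : Vx N) ∨ v = t.1 + ((t.2.1 + t.2.2 : ℕ) : Vx N)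

/-- The number of matchings between the vertex set `I` and those triangles of `T`
lying in `S` : injective allocations, to each vertex of `I`, of an incident triangle. -/
def UMatchIn {N : ℕ} (T : Triang N) (I : Finset (Vx N)) (S : Set (Vx N × ℕ × ℕ)) : ℕ :=
  Set.ncard {f : I → Vx N × ℕ × ℕ | Function.Injective f ∧
    ∀ v : I, IsUTri T (f v) ∧ f v ∈ S ∧ UInc v.1 (f v)}

/-- The number of matchings between the vertex set `I` and the triangulation `T`. -/
def UMatch {N : ℕ} (T : Triang N) (I : Finset (Vx N)) : ℕ :=
  UMatchIn T I Set.univ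

/-- `n_{ij}` : the number of matchings between `T` and all marked points except `i, j`. -/
def nMatch {N : ℕ} [NeZero N] (T : Triang N) (i j : Vx N) : ℕ :=
  UMatch T (Finset.univ \ {i, j})

/-- `i` and `j` are joined by an edge of the triangulated polygon
(a boundary edge or a diagonal of `T`). -/
def Joined {N : ℕ} (T : Triang N) (i j : Vx N) : Prop :=
  j = i + 1 ∨ i = j + 1 ∨ MemD T i j

/-- `x` lies in the closed clockwise arc from `a` to `b`. -/
def InCWArc {N : ℕ} (a x b : Vx N) : Prop := x = a ∨ x = b ∨ Btw a x b

/-- `ℓ` is the Conway–Coxeter labelling of the vertices based at `i` : the vertex `i`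
is labelled `0`, every vertex joined to `i` by an edge (of `T`, or a boundary edge)
is labelled `1`, and in each triangle the vertex on the far side from `i` is labelled
by the sum of the labels of the other two vertices.  The label `ℓ j` is then the
Conway–Coxeter frieze entry `(i,j)`. -/
def IsCCLabel {N : ℕ} (T : Triang N) (i : Vx N) (ℓ : Vx N → ℕ) : Prop :=
  ℓ i = 0 ∧ (∀ j, Joined T i j → ℓ j = 1) ∧
  ∀ a p q, IsUTri T (a, p, q) →
    (InCWArc (a + ((p + q : ℕ) : Vx N)) i a →
      ℓ (a + (p : Vx N)) = ℓ a + ℓ (a + ((p + q : ℕ) : Vx N))) ∧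
    (InCWArc a i (a + (p : Vx N)) →
      ℓ (a + ((p + q : ℕ) : Vx N)) = ℓ a + ℓ (a + (p : Vx N))) ∧
    (InCWArc (a + (p : Vx N)) i (a + ((p + q : ℕ) : Vx N)) →
      ℓ a = ℓ (a + (p : Vx N)) + ℓ (a + ((p + q : ℕ) : Vx N)))

/-! Cut the polygon open at a vertex, so that its vertices become linearly ordered. The triangles on
the inner side of an edge `x`-`y` are as many as the vertices strictly between `x` and `y`, and are
matched with them in exactly one way. Hence, when matching a set of vertices with the triangles, the
part inside an edge can be deleted, vertices and triangles alike.

For a triangle with vertices `x < c < y`, deleting the inside of `c`-`y` reduces the matchings of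
the vertices beyond `c` to those of the vertices beyond `y`, and choosing whether `y` is matched
with this triangle gives the sum rule of Conway and Coxeter. Descending from the longest edge to the
sides of the polygon identifies them with the labels. Cutting just before or just after `i` gives
the two arcs, and the symmetry of the frieze results from comparing the labellings based at `i` and
at `j`. -/

section Matchings

variable {α β : Type*}

/-- The number of systems of distinct representatives of the family `t` over `I`. If `t v` is the
set of triangles at the vertex `v`, this counts the matchings between `I` and the triangles. -/
def numMatchings (t : α → Finset β) (I : Finset α) : ℕ :=
  (hallMatchingsOn t I).ncard

theorem numMatchings_empty (t : α → Finset β) : numMatchings t ∅ = 1 :=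
  Set.ncard_eq_one.2 ⟨isEmptyElim, Set.eq_singleton_iff_unique_mem.2
    ⟨⟨Function.injective_of_subsingleton _, isEmptyElim⟩, fun _ _ => Subsingleton.elim _ _⟩⟩

theorem numMatchings_congr {t t' : α → Finset β} {I : Finset α} (h : ∀ v ∈ I, t v = t' v) :
    numMatchings t I = numMatchings t' I := by
  unfold numMatchings hallMatchingsOn
  congr! 5 with f v
  rw [h v v.2]

theorem ncard_matchings_eq_numMatchings {γ : Type*} {A : Set γ} {r : α → γ → Prop} {g : γ → β}
    {t : α → Finset β} {I : Finset α} (hg : A.InjOn g)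
    (ht : ∀ v ∈ I, g '' {c ∈ A | r v c} = t v) :
    {f : I → γ | Function.Injective f ∧ ∀ v : I, f v ∈ A ∧ r v (f v)}.ncard =
      numMatchings t I := by
  have hmem (v : I) (b : β) : b ∈ t v ↔ ∃ c, (c ∈ A ∧ r v c) ∧ g c = b := by
    rw [← Finset.mem_coe, ← ht v v.2]
    rfl
  refine Set.BijOn.ncard_eq (f := (g ∘ ·)) ⟨fun f hf => ?_, fun f hf f' hf' h => ?_, fun f hf => ?_⟩
  · exact ⟨fun v w h => hf.1 (hg (hf.2 v).1 (hf.2 w).1 h),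
      fun v => (hmem v _).2 ⟨f v, hf.2 v, rfl⟩⟩
  · exact funext fun v => hg (hf.2 v).1 (hf'.2 v).1 (congrFun h v)
  · choose f' hf' hgf' using fun v => (hmem v _).1 (hf.2 v)
    obtain rfl : g ∘ f' = f := funext hgf'
    exact ⟨f', ⟨hf.1.of_comp, hf'⟩, rfl⟩

variable [DecidableEq α] [DecidableEq β]

/-- Splitting off the value at `x` of a matching of `insert x I`. -/
def hallMatchingsOnInsertEquiv (t : α → Finset β) {x : α} {I : Finset α} (hx : x ∉ I) :
    hallMatchingsOn t (insert x I) ≃ Σ b : t x, hallMatchingsOn (fun v => (t v).erase b) I where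
  toFun f := ⟨⟨f.1 ⟨x, I.mem_insert_self x⟩, f.2.2 _⟩,
    fun v => f.1 ⟨v, Finset.mem_insert_of_mem v.2⟩, by
      refine ⟨fun v w h => ?_, fun v => Finset.mem_erase.2 ⟨fun h => ?_, f.2.2 _⟩⟩
      · exact Subtype.ext (by simpa using f.2.1 h)
      · have : v.1 = x := congrArg Subtype.val (f.2.1 h)
        exact hx (this ▸ v.2)⟩
  invFun p := ⟨fun v => if h : v.1 = x then p.1 else
      p.2.1 ⟨v, Finset.mem_of_mem_insert_of_ne v.2 h⟩, by
    obtain ⟨b, g, hg, hgt⟩ := p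
    have hgb (v : I) : g v ∈ t v ∧ g v ≠ b := ⟨Finset.mem_of_mem_erase (hgt v),
      Finset.ne_of_mem_erase (hgt v)⟩
    exact ⟨fun v w h => by grind, by grind⟩⟩
  left_inv f := by
    ext v
    grind
  right_inv p := by
    have hI (v : I) : v.1 ≠ x := fun h => hx (h ▸ v.2)
    exact Sigma.subtype_ext (by simp) (by simp [hI])

theorem numMatchings_insert (t : α → Finset β) {x : α} {I : Finset α} (hx : x ∉ I) :
    numMatchings t (insert x I) = ∑ b ∈ t x, numMatchings (fun v => (t v).erase b) I := by
  unfold numMatchings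
  simp only [← Nat.card_coe_set_eq]
  rw [Nat.card_congr (hallMatchingsOnInsertEquiv t hx), Nat.card_sigma,
    ← Finset.sum_coe_sort (t x)]

theorem numMatchings_insert_of_eq_insert {t t' : α → Finset β} {x : α} {I : Finset α} {b : β}
    (hx : x ∉ I) (htx : t' x = insert b (t x)) (ht : ∀ v ∈ I, t' v = t v)
    (hb : ∀ v ∈ insert x I, b ∉ t v) :
    numMatchings t' (insert x I) = numMatchings t I + numMatchings t (insert x I) := by
  have hI {c : β} : numMatchings (fun v => (t' v).erase c) I =
      numMatchings (fun v => (t v).erase c) I :=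
    numMatchings_congr fun v hv => by rw [ht v hv]
  rw [numMatchings_insert t' hx, htx, Finset.sum_insert (hb x (I.mem_insert_self x)),
    numMatchings_insert t hx]
  simp only [hI]
  congr 1
  exact numMatchings_congr fun v hv =>
    Finset.erase_eq_of_notMem (hb v (Finset.mem_insert_of_mem hv))

end Matchings

section Polygon

variable {V : Type*}

/-- The triangles of the graph `G` at the vertex `v`, as sets of three vertices. -/
def trianglesAt [Fintype V] (G : SimpleGraph V) (v : V) : Finset (Finset V) :=
  {s | G.IsNClique 3 s ∧ v ∈ s}

theorem mem_trianglesAt [Fintype V] {G : SimpleGraph V} {v : V} {s : Finset V} :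
    s ∈ trianglesAt G v ↔ G.IsNClique 3 s ∧ v ∈ s :=
  Finset.mem_filter_univ s

variable [LinearOrder V]

/-- `G` is the edge graph (sides and diagonals) of a triangulation of the convex polygon whose
vertices are listed in the order of `V`. That the diagonals form a maximal noncrossing family is
encoded as follows: a chord is an edge if and only if no edge crosses it. -/
def IsTriangulation (G : SimpleGraph V) : Prop :=
  ∀ ⦃x y⦄, x < y →
    (G.Adj x y ↔ ∀ z ∈ Set.Ioo x y, ∀ w, G.Adj z w → w ∈ Set.Icc x y)

/-- `x < c < y` are the vertices of a triangle of `G`. -/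
structure IsTriangle (G : SimpleGraph V) (x c y : V) : Prop where
  lt_left : x < c
  lt_right : c < y
  adj_left : G.Adj x c
  adj_right : G.Adj c y
  adj_outer : G.Adj x y

variable {G : SimpleGraph V} {x c y : V}

theorem IsTriangle.isNClique (h : IsTriangle G x c y) : G.IsNClique 3 {x, c, y} :=
  SimpleGraph.is3Clique_triple_iff.2 ⟨h.adj_left, h.adj_outer, h.adj_right⟩

theorem IsTriangle.eq_of_triple_eq {x' c' y' : V} (h : IsTriangle G x c y)
    (h' : IsTriangle G x' c' y') (heq : ({x, c, y} : Finset V) = {x', c', y'}) :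
    x = x' ∧ c = c' ∧ y = y' := by
  have mem (v : V) : v = x ∨ v = c ∨ v = y ↔ v = x' ∨ v = c' ∨ v = y' := by
    simpa using Finset.ext_iff.1 heq v
  have hxc := h.lt_left
  have hcy := h.lt_right
  have hxc' := h'.lt_left
  have hcy' := h'.lt_right
  have hx := (mem x).1 (.inl rfl)
  have hc := (mem c).1 (.inr (.inl rfl))
  have hy := (mem y).1 (.inr (.inr rfl))
  grind

theorem exists_isTriangle_of_isNClique {s : Finset V} (hs : G.IsNClique 3 s) :
    ∃ x c y, IsTriangle G x c y ∧ s = {x, c, y} := by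
  obtain ⟨u, v, w, huv, huw, hvw, rfl⟩ := SimpleGraph.is3Clique_iff.1 hs
  have sorted {x c y : V} (hxc : x < c) (hcy : c < y) (h : ({u, v, w} : Finset V) = {x, c, y}) :
      ∃ x c y, IsTriangle G x c y ∧ ({u, v, w} : Finset V) = {x, c, y} := by
    have ⟨h₁, h₂, h₃⟩ := SimpleGraph.is3Clique_triple_iff.1 (h ▸ hs)
    exact ⟨x, c, y, ⟨hxc, hcy, h₁, h₃, h₂⟩, h⟩
  rcases huv.ne.lt_or_gt with h₁ | h₁ <;> rcases hvw.ne.lt_or_gt with h₂ | h₂ <;>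
    rcases huw.ne.lt_or_gt with h₃ | h₃ <;> first
    | exact sorted h₁ h₂ (by grind)
    | exact sorted h₁ h₃ (by grind)
    | exact sorted h₂ h₁ (by grind)
    | exact sorted h₂ h₃ (by grind)
    | exact sorted h₃ h₁ (by grind)
    | exact sorted h₃ h₂ (by grind)

/-- The opposite of the given order, as an order on the same type. It is not an instance: it serves
to read the polygon in the other direction. -/
abbrev reverseOrder (V : Type*) [LinearOrder V] : LinearOrder V :=
  LinearOrder.lift' OrderDual.toDual OrderDual.toDual.injective

theorem IsTriangulation.reverse (hG : IsTriangulation G) :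
    @IsTriangulation V (reverseOrder V) G := by
  intro x y hxy
  rw [G.adj_comm, hG (x := y) (y := x) hxy]
  exact forall_congr' fun z => imp_congr and_comm <|
    forall_congr' fun w => imp_congr_right fun _ => and_comm

theorem IsTriangle.of_reverse (h : @IsTriangle V (reverseOrder V) G x c y) :
    IsTriangle G y c x where
  lt_left := @IsTriangle.lt_right V (reverseOrder V) G x c y h
  lt_right := @IsTriangle.lt_left V (reverseOrder V) G x c y h
  adj_left := (@IsTriangle.adj_right V (reverseOrder V) G x c y h).symm
  adj_right := (@IsTriangle.adj_left V (reverseOrder V) G x c y h).symm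
  adj_outer := (@IsTriangle.adj_outer V (reverseOrder V) G x c y h).symm

namespace IsTriangulation

variable (hG : IsTriangulation G)
include hG

theorem adj_of_covBy (h : x ⋖ y) : G.Adj x y :=
  (hG h.lt).2 fun _ hz => (h.2 hz.1 hz.2).elim

theorem adj_of_isBot_of_isTop (hx : IsBot x) (hy : IsTop y) (h : x < y) : G.Adj x y :=
  (hG h).2 fun _ _ w _ => ⟨hx w, hy w⟩

theorem mem_Icc_of_adj {z w : V} (h : G.Adj x y) (hz : z ∈ Set.Ioo x y) (hzw : G.Adj z w) :
    w ∈ Set.Icc x y :=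
  (hG (hz.1.trans hz.2)).1 h z hz w hzw

variable [Finite V]

-- The apex is the last neighbour of `x` before `y`.
theorem exists_isTriangle (hxy : x < y) (h : G.Adj x y) (hcov : ¬ x ⋖ y) :
    ∃ c, IsTriangle G x c y := by
  obtain ⟨c₀, hc₀, hc₀y⟩ := exists_covBy_le_of_lt hxy
  have hne : c₀ ≠ y := fun h => hcov (h ▸ hc₀)
  obtain ⟨c, hc, hmax⟩ := (Set.toFinite {c | x < c ∧ c < y ∧ G.Adj x c}).exists_maximal
    ⟨c₀, hc₀.lt, hc₀y.lt_of_ne hne, hG.adj_of_covBy hc₀⟩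
  refine ⟨c, hc.1, hc.2.1, hc.2.2, (hG hc.2.1).2 fun z hz w hzw => ?_, h⟩
  have hw := hG.mem_Icc_of_adj h ⟨hc.1.trans hz.1, hz.2⟩ hzw
  refine ⟨le_of_not_gt fun hwc => ?_, hw.2⟩
  rcases hw.1.eq_or_lt with rfl | hxw
  · exact (hmax ⟨hc.1.trans hz.1, hz.2, hzw.symm⟩ hz.1.le).not_gt hz.1
  · exact (hG.mem_Icc_of_adj hc.2.2 ⟨hxw, hwc⟩ hzw.symm).2.not_gt hz.1

theorem edge_induction {P : V → V → Prop} (covBy : ∀ x y, x ⋖ y → P x y)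
    (triangle : ∀ x c y, IsTriangle G x c y → P x c → P c y → P x y) (x y : V)
    (hxy : x < y) (h : G.Adj x y) : P x y := by
  by_cases hcov : x ⋖ y
  · exact covBy x y hcov
  obtain ⟨c, hc⟩ := hG.exists_isTriangle hxy h hcov
  have hxc := hc.lt_left
  have hcy := hc.lt_right
  exact triangle x c y hc (edge_induction covBy triangle x c hxc hc.adj_left)
    (edge_induction covBy triangle c y hcy hc.adj_right)
termination_by (Set.Ioo x y).ncard
decreasing_by
  · exact Set.ncard_lt_ncard <| Set.ssubset_iff_exists.2
      ⟨Set.Ioo_subset_Ioo_right hcy.le, c, by simp [hxc, hcy]⟩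
  · exact Set.ncard_lt_ncard <| Set.ssubset_iff_exists.2
      ⟨Set.Ioo_subset_Ioo_left hxc.le, c, by simp [hxc, hcy]⟩

theorem edge_descent {Q : V → V → Prop} {b t : V} (hb : IsBot b) (ht : IsTop t) (root : Q b t)
    (step : ∀ x c y, IsTriangle G x c y → Q x y → Q x c ∧ Q c y) (hxy : x < y) (h : G.Adj x y) :
    Q x y := by
  have hbt : b < t := (hb x).trans_lt (hxy.trans_le (ht y))
  refine hG.edge_induction (P := fun p q => Q p q → ∀ u v, p ≤ u → u < v → v ≤ q → G.Adj u v →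
    Q u v) (fun p q hpq hQ u v hu huv hv _ => ?_) (fun p c q hc ihp ihq hQ u v hu huv hv h => ?_)
    b t hbt (hG.adj_of_isBot_of_isTop hb ht hbt) root x y (hb x) hxy (ht y) h
  · have := hpq.2 (c := u)
    have := hpq.2 (c := v)
    grind
  · obtain ⟨hpc, hcq⟩ := step p c q hc hQ
    rcases le_or_gt v c with hvc | hcv
    · exact ihp hpc u v hu huv hvc h
    rcases le_or_gt c u with hcu | huc
    · exact ihq hcq u v hcu huv hv h
    have hup : p = u := hu.eq_or_lt.resolve_right fun hu =>
      (hG.mem_Icc_of_adj hc.adj_left ⟨hu, huc⟩ h).2.not_gt hcv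
    have hvq : v = q := hv.eq_or_lt.resolve_right fun hv =>
      (hG.mem_Icc_of_adj hc.adj_right ⟨hcv, hv⟩ h.symm).1.not_gt huc
    rwa [← hup, hvq]

end IsTriangulation

variable [Fintype V]

/-- The triangles of `G` all of whose vertices lie between `x` and `y`. -/
def trianglesIn (G : SimpleGraph V) (x y : V) : Finset (Finset V) :=
  {s | G.IsNClique 3 s ∧ ∀ v ∈ s, v ∈ Set.Icc x y}

theorem mem_trianglesIn {s : Finset V} :
    s ∈ trianglesIn G x y ↔ G.IsNClique 3 s ∧ ∀ v ∈ s, v ∈ Set.Icc x y :=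
  Finset.mem_filter_univ s

theorem mem_trianglesIn_iff_exists {s : Finset V} : s ∈ trianglesIn G x y ↔
    ∃ p q r, IsTriangle G p q r ∧ x ≤ p ∧ r ≤ y ∧ s = {p, q, r} := by
  rw [mem_trianglesIn]
  constructor
  · rintro ⟨hs, hxy⟩
    obtain ⟨p, q, r, h, rfl⟩ := exists_isTriangle_of_isNClique hs
    exact ⟨p, q, r, h, (hxy p (by simp)).1, (hxy r (by simp)).2, rfl⟩
  · rintro ⟨p, q, r, h, hp, hr, rfl⟩
    have := h.lt_left
    have := h.lt_right
    exact ⟨h.isNClique, by grind⟩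

theorem trianglesIn_eq_empty_of_covBy (h : x ⋖ y) : trianglesIn G x y = ∅ := by
  refine Finset.eq_empty_of_forall_notMem fun s hs => ?_
  obtain ⟨p, q, r, hpqr, hp, hr, -⟩ := mem_trianglesIn_iff_exists.1 hs
  exact h.2 (hp.trans_lt hpqr.lt_left) (hpqr.lt_right.trans_le hr)

theorem notMem_trianglesIn_of_lt {s : Finset V} {v : V} (hv : v ∈ s) (h : y < v) :
    s ∉ trianglesIn G x y :=
  fun hs => ((mem_trianglesIn.1 hs).2 v hv).2.not_gt h

theorem notMem_trianglesIn_of_gt {s : Finset V} {v : V} (hv : v ∈ s) (h : v < x) :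
    s ∉ trianglesIn G x y :=
  fun hs => ((mem_trianglesIn.1 hs).2 v hv).1.not_gt h

/-- The triangles of `G` at `v` that have a vertex outside the interval from `x` to `y`. -/
def trianglesOutside (G : SimpleGraph V) (x y v : V) : Finset (Finset V) :=
  trianglesAt G v \ trianglesIn G x y

theorem trianglesOutside_of_lt {v : V} (h : y < v) :
    trianglesOutside G x y v = trianglesAt G v :=
  Finset.sdiff_eq_self_of_disjoint <| Finset.disjoint_left.2 fun _ hs =>
    notMem_trianglesIn_of_lt (mem_trianglesAt.1 hs).2 h

namespace IsTriangulation

variable (hG : IsTriangulation G)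
include hG

theorem trianglesAt_subset_trianglesIn (h : G.Adj x y) (hc : c ∈ Set.Ioo x y) :
    trianglesAt G c ⊆ trianglesIn G x y := by
  intro s hs
  obtain ⟨hs, hcs⟩ := mem_trianglesAt.1 hs
  refine mem_trianglesIn.2 ⟨hs, fun v hv => ?_⟩
  by_cases hcv : c = v
  · exact hcv ▸ Set.Ioo_subset_Icc_self hc
  · exact hG.mem_Icc_of_adj h hc (hs.isClique hcs hv hcv)

theorem trianglesIn_eq_insert (hc : IsTriangle G x c y) :
    trianglesIn G x y = insert {x, c, y} (trianglesIn G x c ∪ trianglesIn G c y) := by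
  have hxc := hc.lt_left
  have hcy := hc.lt_right
  ext s
  simp only [Finset.mem_insert, Finset.mem_union, mem_trianglesIn_iff_exists]
  constructor
  · rintro ⟨p, q, r, h, hp, hr, rfl⟩
    have hpq := h.lt_left
    have hqr := h.lt_right
    rcases le_or_gt r c with hrc | hcr
    · exact .inr (.inl ⟨p, q, r, h, hp, hrc, rfl⟩)
    rcases le_or_gt c p with hcp | hpc
    · exact .inr (.inr ⟨p, q, r, h, hcp, hr, rfl⟩)
    have hl {u v : V} (huv : G.Adj u v) (hu : x ≤ u) (huc : u < c) (hcv : c < v) : u = x :=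
      of_not_not fun hux => (hG.mem_Icc_of_adj hc.adj_left
        ⟨hu.lt_of_ne' hux, huc⟩ huv).2.not_gt hcv
    have hr' {u v : V} (huv : G.Adj u v) (hu : u ≤ y) (huc : c < u) (hcv : v < c) : u = y :=
      of_not_not fun huy => (hG.mem_Icc_of_adj hc.adj_right
        ⟨huc, hu.lt_of_ne huy⟩ huv).1.not_gt hcv
    obtain rfl := hl h.adj_outer hp hpc hcr
    obtain rfl := hr' h.adj_outer.symm hr hcr hpc
    rcases lt_trichotomy q c with hq | rfl | hq
    · exact (hpq.ne' (hl h.adj_right hpq.le hq hcr)).elim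
    · exact .inl rfl
    · exact (hqr.ne (hr' h.adj_left.symm hqr.le hq hpc)).elim
  · rintro (rfl | ⟨p, q, r, h, hp, hr, rfl⟩ | ⟨p, q, r, h, hp, hr, rfl⟩)
    · exact ⟨x, c, y, hc, le_rfl, le_rfl, rfl⟩
    · exact ⟨p, q, r, h, hp, hr.trans hcy.le, rfl⟩
    · exact ⟨p, q, r, h, hxc.le.trans hp, hr, rfl⟩

theorem trianglesAt_sdiff_apex (hc : IsTriangle G x c y) :
    (trianglesAt G c \ trianglesIn G x c) \ trianglesIn G c y = {{x, c, y}} := by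
  have hsub := hG.trianglesAt_subset_trianglesIn hc.adj_outer ⟨hc.lt_left, hc.lt_right⟩
  rw [hG.trianglesIn_eq_insert hc] at hsub
  have hmem : {x, c, y} ∈ trianglesAt G c := mem_trianglesAt.2 ⟨hc.isNClique, by simp⟩
  have hl : {x, c, y} ∉ trianglesIn G x c := notMem_trianglesIn_of_lt (v := y) (by simp) hc.lt_right
  have hr : {x, c, y} ∉ trianglesIn G c y := notMem_trianglesIn_of_gt (v := x) (by simp) hc.lt_left
  ext s
  have := @hsub s
  simp only [Finset.mem_sdiff, Finset.mem_singleton]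
  grind

theorem numMatchings_sdiff_insert_apex (hc : IsTriangle G x c y) {t : V → Finset (Finset V)}
    {I : Finset V} (htc : t c = trianglesAt G c) (hI : c ∉ I) :
    numMatchings (fun v => (t v \ trianglesIn G x c) \ trianglesIn G c y) (insert c I) =
      numMatchings (fun v => t v \ trianglesIn G x y) I := by
  rw [numMatchings_insert _ hI, htc, hG.trianglesAt_sdiff_apex hc, Finset.sum_singleton,
    hG.trianglesIn_eq_insert hc]
  exact numMatchings_congr fun v _ => by
    rw [sdiff_sdiff_left, Finset.sup_eq_union, Finset.sdiff_insert]

-- Inside an edge `x`-`y` there are as many triangles as vertices, and they match in one way only.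
theorem numMatchings_Ioo_union (hxy : x < y) (h : G.Adj x y) {t : V → Finset (Finset V)}
    {I : Finset V} (ht : ∀ v ∈ Set.Ioo x y, t v = trianglesAt G v)
    (hI : ∀ v ∈ I, v ∉ Set.Ioo x y) :
    numMatchings t (({v | x < v ∧ v < y} : Finset V) ∪ I) =
      numMatchings (fun v => t v \ trianglesIn G x y) I := by
  refine hG.edge_induction (P := fun x y => ∀ (t : V → Finset (Finset V)) (I : Finset V),
    (∀ v ∈ Set.Ioo x y, t v = trianglesAt G v) → (∀ v ∈ I, v ∉ Set.Ioo x y) →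
    numMatchings t (({v | x < v ∧ v < y} : Finset V) ∪ I) =
      numMatchings (fun v => t v \ trianglesIn G x y) I) (fun x y hxy t I _ _ => ?_)
    (fun x c y hc ihl ihr t I ht hI => ?_) x y hxy h t I ht hI
  · have hIoo : ({v | x < v ∧ v < y} : Finset V) = ∅ :=
      Finset.filter_eq_empty_iff.2 fun v _ hv => hxy.2 hv.1 hv.2
    simp [hIoo, trianglesIn_eq_empty_of_covBy hxy]
  · have hxc := hc.lt_left
    have hcy := hc.lt_right
    have hIoo : ({v | x < v ∧ v < y} : Finset V) ∪ I =
        ({v | x < v ∧ v < c} : Finset V) ∪ (({v | c < v ∧ v < y} : Finset V) ∪ insert c I) := by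
      grind
    rw [hIoo, ihl t _ (by grind) (by grind), ihr _ _ (fun v hv => ?_) (by grind),
      hG.numMatchings_sdiff_insert_apex hc (ht c ⟨hxc, hcy⟩) (by grind)]
    rw [ht v ⟨hxc.trans hv.1, hv.2⟩]
    exact trianglesOutside_of_lt hv.1

theorem trianglesOutside_right_self (hc : IsTriangle G x c y) :
    trianglesOutside G c y y = insert {x, c, y} (trianglesOutside G x y y) := by
  have hy : {x, c, y} ∈ trianglesAt G y := mem_trianglesAt.2 ⟨hc.isNClique, by simp⟩
  have hr : {x, c, y} ∉ trianglesIn G c y := notMem_trianglesIn_of_gt (v := x) (by simp) hc.lt_left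
  have hl : ∀ s ∈ trianglesAt G y, s ∉ trianglesIn G x c := fun s hs =>
    notMem_trianglesIn_of_lt (mem_trianglesAt.1 hs).2 hc.lt_right
  ext s
  simp only [trianglesOutside, hG.trianglesIn_eq_insert hc]
  grind

theorem numMatchings_trianglesOutside_right (hc : IsTriangle G x c y) :
    numMatchings (trianglesOutside G c y) {v | y ≤ v} =
      numMatchings (trianglesOutside G x y) {v | y < v} +
        numMatchings (trianglesOutside G x y) {v | y ≤ v} := by
  have hIci : ({v | y ≤ v} : Finset V) = insert y ({v | y < v} : Finset V) := by grind
  rw [hIci]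
  refine numMatchings_insert_of_eq_insert (by simp) (hG.trianglesOutside_right_self hc)
    (fun v hv => ?_) fun v _ h => ?_
  · rw [trianglesOutside_of_lt, trianglesOutside_of_lt] <;> simpa using hv
  · exact (Finset.mem_sdiff.1 h).2 (hG.trianglesIn_eq_insert hc ▸ Finset.mem_insert_self ..)

theorem numMatchings_trianglesOutside_left_Ioi (hc : IsTriangle G x c y) :
    numMatchings (trianglesOutside G x c) {v | c < v} =
      numMatchings (trianglesOutside G c y) {v | y ≤ v} := by
  have hcy := hc.lt_right
  have hIoi : ({v | c < v} : Finset V) =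
      ({v | c < v ∧ v < y} : Finset V) ∪ ({v | y ≤ v} : Finset V) := by grind
  rw [hIoi, hG.numMatchings_Ioo_union hcy hc.adj_right
    (fun v hv => trianglesOutside_of_lt hv.1) (by grind)]
  exact numMatchings_congr fun v hv => by
    rw [trianglesOutside_of_lt (by grind)]
    rfl

theorem numMatchings_trianglesOutside_left_Ici (hc : IsTriangle G x c y) :
    numMatchings (trianglesOutside G x c) {v | c ≤ v} =
      numMatchings (trianglesOutside G x y) {v | y ≤ v} := by
  have hcy := hc.lt_right
  have hIci : ({v | c ≤ v} : Finset V) =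
      ({v | c < v ∧ v < y} : Finset V) ∪ insert c ({v | y ≤ v} : Finset V) := by grind
  rw [hIci, hG.numMatchings_Ioo_union hcy hc.adj_right
    (fun v hv => trianglesOutside_of_lt hv.1) (by grind)]
  exact hG.numMatchings_sdiff_insert_apex hc rfl (by grind)

-- Descending from the longest edge, the two counts obey the same rule as the labels.
theorem numMatchings_trianglesOutside {l : V → ℕ}
    (hl : ∀ x c y, IsTriangle G x c y → l c = l x + l y) {b t : V} (hb : IsBot b) (ht : IsTop t)
    (hlb : l b = 0) (hlt : l t = 1) (hxy : x < y) (h : G.Adj x y) :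
    numMatchings (trianglesOutside G x y) {v | y < v} = l y ∧
      numMatchings (trianglesOutside G x y) {v | y ≤ v} = l x := by
  refine hG.edge_descent (Q := fun x y =>
    numMatchings (trianglesOutside G x y) {v | y < v} = l y ∧
      numMatchings (trianglesOutside G x y) {v | y ≤ v} = l x) hb ht ⟨?_, ?_⟩ ?_ hxy h
  · have hIoi : ({v | t < v} : Finset V) = ∅ :=
      Finset.filter_eq_empty_iff.2 fun v _ => (ht v).not_gt
    rw [hIoi, numMatchings_empty, hlt]
  · have hout : trianglesOutside G b t t = ∅ := Finset.sdiff_eq_empty_iff_subset.2 fun s hs =>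
      mem_trianglesIn.2 ⟨(mem_trianglesAt.1 hs).1, fun v _ => ⟨hb v, ht v⟩⟩
    have hIci : ({v | t ≤ v} : Finset V) = insert t (∅ : Finset V) := by
      ext v
      simp [(ht v).ge_iff_eq', eq_comm]
    rw [hIci, numMatchings_insert _ (Finset.notMem_empty t), hout, Finset.sum_empty, hlb]
  · rintro x c y hc ⟨hQy, hQx⟩
    have hQc : numMatchings (trianglesOutside G c y) {v | y ≤ v} = l c := by
      rw [hG.numMatchings_trianglesOutside_right hc, hQy, hQx, hl x c y hc, add_comm]
    refine ⟨⟨?_, ?_⟩, ?_, hQc⟩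
    · rw [hG.numMatchings_trianglesOutside_left_Ioi hc, hQc]
    · rw [hG.numMatchings_trianglesOutside_left_Ici hc, hQx]
    · rw [← hQy]
      exact numMatchings_congr fun v hv => by
        rw [trianglesOutside_of_lt, trianglesOutside_of_lt] <;> simpa using hv

theorem numMatchings_Ioi {l : V → ℕ} (hl : ∀ x c y, IsTriangle G x c y → l c = l x + l y)
    {b t j : V} (hb : IsBot b) (ht : IsTop t) (hlb : l b = 0) (hlt : l t = 1) (hj : j ≠ b) :
    numMatchings (trianglesAt G) {v | j < v} = l j := by
  obtain ⟨k, -, hkj⟩ := exists_le_covBy_of_lt ((hb j).lt_of_ne' hj)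
  have hout : trianglesOutside G k j = trianglesAt G := funext fun v => by
    rw [trianglesOutside, trianglesIn_eq_empty_of_covBy hkj, Finset.sdiff_empty]
  exact hout ▸ (hG.numMatchings_trianglesOutside hl hb ht hlb hlt hkj.lt (hG.adj_of_covBy hkj)).1

theorem numMatchings_Iio {l : V → ℕ} (hl : ∀ x c y, IsTriangle G x c y → l c = l x + l y)
    {b t j : V} (hb : IsBot b) (ht : IsTop t) (hlb : l b = 1) (hlt : l t = 0) (hj : j ≠ t) :
    numMatchings (trianglesAt G) {v | v < j} = l j := by
  have hl' (x c y : V) (h : @IsTriangle V (reverseOrder V) G x c y) : l c = l x + l y :=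
    (hl y c x h.of_reverse).trans (add_comm ..)
  rw [← @numMatchings_Ioi V (reverseOrder V) G _ hG.reverse l hl' t b j ht hb hlt hlb hj]
  congr

end IsTriangulation

end Polygon

section Cyclic

variable {N : ℕ} [NeZero N]

/-- The linear order of the marked points met when going clockwise from `a`. It is not an instance:
the choice of `a` is where the polygon is cut open. -/
abbrev cwOrder (a : Vx N) : LinearOrder (Vx N) :=
  LinearOrder.lift' (fun v => (v - a).val)
    ((ZMod.val_injective N).comp (sub_left_injective (b := a)))

theorem val_add_val_sub (x y : Vx N) :
    y.val + (x - y).val = x.val ∨ y.val + (x - y).val = x.val + N := by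
  rcases lt_or_ge (y.val + (x - y).val) N with h | h
  · exact .inl (by rw [← ZMod.val_add_of_lt h, add_sub_cancel])
  · exact .inr (by rw [ZMod.val_add_val_of_le h, add_sub_cancel])

theorem btw_iff_cwOrder (a u v w : Vx N) : letI := cwOrder a
    Btw u v w ↔ u < v ∧ v < w ∨ v < w ∧ w < u ∨ w < u ∧ u < v := by
  change Btw u v w ↔ (u - a).val < (v - a).val ∧ (v - a).val < (w - a).val ∨
    (v - a).val < (w - a).val ∧ (w - a).val < (u - a).val ∨
    (w - a).val < (u - a).val ∧ (u - a).val < (v - a).val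
  rw [Btw, ← sub_sub_sub_cancel_right v u a, ← sub_sub_sub_cancel_right w u a]
  have := val_add_val_sub (v - a) (u - a)
  have := val_add_val_sub (w - a) (u - a)
  have := (u - a).val_lt
  have := (v - a).val_lt
  have := (w - a).val_lt
  have := ((v - a) - (u - a)).val_lt
  have := ((w - a) - (u - a)).val_lt
  omega

variable {T : Triang N} {i j u v w x c y : Vx N}

omit [NeZero N] in
theorem Joined.symm (h : Joined T u v) : Joined T v u := by
  rw [Joined, MemD] at *
  tauto

/-- The graph of the sides and diagonals of a triangulated disc. -/
def edgeGraph (T : Triang N) : SimpleGraph (Vx N) where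
  Adj u v := u ≠ v ∧ Joined T u v
  symm := ⟨fun _ _ h => ⟨h.1.symm, h.2.symm⟩⟩
  loopless := ⟨fun _ h => h.1 rfl⟩

omit [NeZero N] in
theorem not_btw_self_add_one (x z : Vx N) : ¬ Btw x z (x + 1) := by
  rintro ⟨h₀, h₁⟩
  rw [add_sub_cancel_left, ZMod.val_one_eq_one_mod] at h₁
  exact (Nat.lt_of_le_of_lt h₀ h₁).not_ge (Nat.mod_le 1 N)

omit [NeZero N] in
theorem Joined.memD_of_btw (h : Joined T x y) (hu : Btw x u y) (hv : Btw y v x) : MemD T x y := by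
  rcases h with rfl | rfl | h
  · exact (not_btw_self_add_one _ _ hu).elim
  · exact (not_btw_self_add_one _ _ hv).elim
  · exact h

theorem joined_iff_not_crossed (hxy : x ≠ y) :
    Joined T x y ↔ ∀ z w, Joined T z w → Btw x z y → ¬ Btw y w x := by
  constructor
  · intro h z w hzw hz hw
    have hcross : Btw z y w ∧ Btw w x z := by
      let := cwOrder x
      simp only [btw_iff_cwOrder x] at *
      grind
    have hxy := h.memD_of_btw hz hw
    have hzw := hzw.memD_of_btw hcross.1 hcross.2
    rcases hxy with hp | hp <;> rcases hzw with hq | hq <;>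
      exact T.noncross _ hp _ hq (by simp [DCross, hz, hw])
  · intro h
    by_contra hnot
    rw [Joined, not_or, not_or] at hnot
    refine hnot.2.2 (T.maximal (x, y) ⟨hxy.symm, hnot.1, hnot.2.1⟩ fun q hq => ?_)
    rintro (⟨hz, hw⟩ | ⟨hz, hw⟩)
    · exact h _ _ (.inr (.inr (.inl hq))) hz hw
    · exact h _ _ (.inr (.inr (.inr hq))) hz hw

theorem isTriangulation_edgeGraph (T : Triang N) (a : Vx N) :
    @IsTriangulation (Vx N) (cwOrder a) (edgeGraph T) := by
  let := cwOrder a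
  intro x y hxy
  have hjoin : (edgeGraph T).Adj x y ↔ Joined T x y := and_iff_right hxy.ne
  rw [hjoin]
  simp only [joined_iff_not_crossed hxy.ne, btw_iff_cwOrder a, edgeGraph, Set.mem_Ioo,
    Set.mem_Icc]
  grind

omit [NeZero N] in
theorem Joined.of_uSide {d : ℕ} (h : USide T u d) (hd : u + d = v) : Joined T u v := by
  rcases h with rfl | h
  · exact .inl (by rw [← hd, Nat.cast_one])
  · exact .inr (.inr (hd ▸ h))

-- The bound on `d` excludes the side from `v` to `v + 1 = u`, seen the long way round.
omit [NeZero N] in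
theorem Joined.uSide {d : ℕ} (h : Joined T u v) (hd : u + d = v) (hd₀ : 1 ≤ d) (hdN : d + 2 ≤ N) :
    USide T u d := by
  rcases h with rfl | rfl | h
  · have hd1 : (d : ZMod N) = (1 : ℕ) := by rw [Nat.cast_one, add_left_cancel hd]
    rw [ZMod.natCast_eq_natCast_iff', Nat.mod_eq_of_lt (by omega),
      Nat.mod_eq_of_lt (by omega)] at hd1
    exact .inl hd1
  · have hd0 : ((d + 1 : ℕ) : ZMod N) = 0 := by
      rw [Nat.cast_add_one]
      linear_combination hd
    exact absurd (Nat.le_of_dvd d.succ_pos ((ZMod.natCast_eq_zero_iff _ _).1 hd0)) (by omega)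
  · exact .inr (hd ▸ h)

theorem add_val_sub_val (h : u.val ≤ v.val) : u + ((v.val - u.val : ℕ) : Vx N) = v := by
  rw [Nat.cast_sub h, ZMod.natCast_zmod_val, ZMod.natCast_zmod_val, add_sub_cancel]

theorem add_val_sub_val_add (huv : u.val ≤ v.val) (hvw : v.val ≤ w.val) :
    u + ((v.val - u.val + (w.val - v.val) : ℕ) : Vx N) = w := by
  rw [Nat.cast_add, ← add_assoc, add_val_sub_val huv, add_val_sub_val hvw]

theorem val_add_natCast_of_lt {d : ℕ} (hd : d < N) (h : u.val < (u + (d : Vx N)).val) :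
    (u + (d : Vx N)).val = u.val + d := by
  have hval := ZMod.val_cast_of_lt hd
  rcases lt_or_ge (u.val + (d : Vx N).val) N with hlt | hge
  · rw [ZMod.val_add_of_lt hlt, hval]
  · have := ZMod.val_add_val_of_le hge
    omega

-- Cutting the polygon open at `0` puts the vertex carrying the smallest label first.
theorem lt_cwOrder_zero_iff : (cwOrder 0).lt u v ↔ u.val < v.val := by
  change (u - 0).val < (v - 0).val ↔ _
  rw [sub_zero, sub_zero]

theorem isUTri_of_isTriangle (h : @IsTriangle (Vx N) (cwOrder 0) (edgeGraph T) u v w) :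
    IsUTri T (u, v.val - u.val, w.val - v.val) := by
  obtain ⟨huv, hvw, ⟨-, juv⟩, ⟨-, jvw⟩, ⟨-, juw⟩⟩ := h
  have huv : u.val < v.val := lt_cwOrder_zero_iff.1 huv
  have hvw : v.val < w.val := lt_cwOrder_zero_iff.1 hvw
  have hwN := w.val_lt
  have hv := add_val_sub_val huv.le
  have hw := add_val_sub_val hvw.le
  have huw := add_val_sub_val_add huv.le hvw.le
  have hwu : w + ((N - (v.val - u.val) - (w.val - v.val) : ℕ) : Vx N) = u := by
    rw [Nat.sub_sub, Nat.cast_sub (by omega), ZMod.natCast_self]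
    linear_combination -huw
  simp only [IsUTri, hv, huw]
  exact ⟨by omega, by omega, by omega, juv.uSide hv (by omega) (by omega),
    jvw.uSide hw (by omega) (by omega), juw.symm.uSide hwu (by omega) (by omega), huv,
    huv.trans hvw⟩

theorem isTriangle_of_isUTri {p q : ℕ} (h : IsUTri T (u, p, q)) :
    @IsTriangle (Vx N) (cwOrder 0) (edgeGraph T) u (u + p) (u + (p + q : ℕ)) := by
  obtain ⟨-, hq, hpq, huv, hvw, hwu, hv, hw⟩ := h
  dsimp only at *
  have hv := val_add_natCast_of_lt (by omega) hv
  have hw := val_add_natCast_of_lt (by omega) hw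
  have hvw' : u + p + (q : Vx N) = u + (p + q : ℕ) := by rw [Nat.cast_add, add_assoc]
  have hwu' : u + ((p + q : ℕ) : Vx N) + ((N - p - q : ℕ) : Vx N) = u := by
    rw [Nat.sub_sub, Nat.cast_sub (by omega), ZMod.natCast_self]
    ring
  have lt₁ : (cwOrder 0).lt u (u + (p : Vx N)) := lt_cwOrder_zero_iff.2 (by omega)
  have lt₂ : (cwOrder 0).lt (u + (p : Vx N)) (u + ((p + q : ℕ) : Vx N)) :=
    lt_cwOrder_zero_iff.2 (by omega)
  let := cwOrder (0 : Vx N)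
  exact ⟨lt₁, lt₂, ⟨lt₁.ne, .of_uSide huv rfl⟩, ⟨lt₂.ne, .of_uSide hvw hvw'⟩,
    ⟨(lt_trans lt₁ lt₂).ne, (Joined.of_uSide hwu hwu').symm⟩⟩

theorem IsCCLabel.eq_add {l : Vx N → ℕ} (h : IsCCLabel T i l) (hbtw : Btw x c y)
    (hxc : Joined T x c) (hcy : Joined T c y) (hxy : Joined T x y) (hi : InCWArc y i x) :
    l c = l x + l y := by
  let := cwOrder (0 : Vx N)
  have rule {u v w : Vx N} (huv : u < v) (hvw : v < w) (juv : Joined T u v) (jvw : Joined T v w)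
      (juw : Joined T u w) := by
    have ht : IsTriangle (edgeGraph T) u v w :=
      ⟨huv, hvw, ⟨huv.ne, juv⟩, ⟨hvw.ne, jvw⟩, ⟨(huv.trans hvw).ne, juw⟩⟩
    have hrule := h.2.2 _ _ _ (isUTri_of_isTriangle ht)
    have huv : u.val < v.val := lt_cwOrder_zero_iff.1 huv
    have hvw : v.val < w.val := lt_cwOrder_zero_iff.1 hvw
    rw [add_val_sub_val huv.le, add_val_sub_val_add huv.le hvw.le] at hrule
    exact hrule
  rcases (btw_iff_cwOrder 0 _ _ _).1 hbtw with ⟨h₁, h₂⟩ | ⟨h₁, h₂⟩ | ⟨h₁, h₂⟩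
  · exact (rule h₁ h₂ hxc hcy hxy).1 hi
  · rw [add_comm, (rule h₁ h₂ hcy hxy.symm hxc.symm).2.2 hi]
  · rw [add_comm, (rule h₁ h₂ hxy.symm hxc hcy.symm).2.1 hi]

/-- The vertex set of a triangle in the encoding of `IsUTri`. -/
def vertexSet (t : Vx N × ℕ × ℕ) : Finset (Vx N) :=
  {t.1, t.1 + (t.2.1 : Vx N), t.1 + ((t.2.1 + t.2.2 : ℕ) : Vx N)}

theorem injOn_vertexSet (T : Triang N) : Set.InjOn vertexSet {t | IsUTri T t} := by
  rintro ⟨u, p, q⟩ ht ⟨u', p', q'⟩ ht' heq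
  unfold vertexSet at heq
  let := cwOrder (0 : Vx N)
  obtain ⟨rfl, hv, hw⟩ :=
    (isTriangle_of_isUTri ht).eq_of_triple_eq (isTriangle_of_isUTri ht') (by convert heq)
  have val_add {p q : ℕ} (ht : IsUTri T (u, p, q)) :
      (u + (p : Vx N)).val = u.val + p ∧ (u + ((p + q : ℕ) : Vx N)).val = u.val + (p + q) := by
    obtain ⟨hp, hq, hpq, -, -, -, hv, hw⟩ := ht
    dsimp only at *
    exact ⟨val_add_natCast_of_lt (by omega) hv, val_add_natCast_of_lt (by omega) hw⟩
  have := val_add ht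
  have := val_add ht'
  have := congrArg ZMod.val hv
  have := congrArg ZMod.val hw
  obtain rfl : p = p' := by omega
  obtain rfl : q = q' := by omega
  rfl

theorem image_vertexSet (T : Triang N) (v : Vx N) :
    vertexSet '' {t | IsUTri T t ∧ UInc v t} = trianglesAt (edgeGraph T) v := by
  let := cwOrder (0 : Vx N)
  ext s
  rw [Finset.mem_coe, mem_trianglesAt]
  constructor
  · rintro ⟨⟨u, p, q⟩, ⟨ht, hv⟩, rfl⟩
    constructor
    · unfold vertexSet
      convert (isTriangle_of_isUTri ht).isNClique
    · simpa only [UInc, vertexSet, Finset.mem_insert, Finset.mem_singleton] using hv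
  · rintro ⟨hs, hv⟩
    obtain ⟨x, c, y, h, rfl⟩ := exists_isTriangle_of_isNClique hs
    have hxc := (lt_cwOrder_zero_iff.1 h.lt_left).le
    have hcy := (lt_cwOrder_zero_iff.1 h.lt_right).le
    refine ⟨(x, c.val - x.val, y.val - c.val), ⟨isUTri_of_isTriangle h, ?_⟩, ?_⟩
    · simpa only [UInc, add_val_sub_val hxc, add_val_sub_val_add hxc hcy, Finset.mem_insert,
        Finset.mem_singleton] using hv
    · simp only [vertexSet, add_val_sub_val hxc, add_val_sub_val_add hxc hcy]
      congr!

theorem uMatch_eq_numMatchings (T : Triang N) (I : Finset (Vx N)) :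
    UMatch T I = numMatchings (trianglesAt (edgeGraph T)) I := by
  simp only [UMatch, UMatchIn, Set.mem_univ, true_and]
  exact ncard_matchings_eq_numMatchings (A := {t | IsUTri T t}) (r := UInc) (injOn_vertexSet T)
    fun v _ => image_vertexSet T v

variable {l : Vx N → ℕ} {a : Vx N}

theorem IsCCLabel.eq_add_of_isTriangle (h : IsCCLabel T i l)
    (hc : @IsTriangle (Vx N) (cwOrder a) (edgeGraph T) x c y)
    (hi : letI := cwOrder a; i ≤ x ∨ y ≤ i) : l c = l x + l y := by
  let := cwOrder a
  have hxc := hc.lt_left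
  have hcy := hc.lt_right
  refine h.eq_add ((btw_iff_cwOrder a _ _ _).2 (.inl ⟨hxc, hcy⟩)) hc.adj_left.2 hc.adj_right.2
    hc.adj_outer.2 ?_
  simp only [InCWArc, btw_iff_cwOrder a]
  grind

theorem isBot_cwOrder (a : Vx N) : letI := cwOrder a; IsBot a := fun v => by
  change (a - a).val ≤ (v - a).val
  simp

theorem isTop_cwOrder (a : Vx N) : letI := cwOrder a; IsTop (a - 1) := fun v => by
  change (v - a).val ≤ (a - 1 - a).val
  obtain ⟨n, rfl⟩ := Nat.exists_eq_succ_of_ne_zero (NeZero.ne N)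
  rw [sub_sub_cancel_left, ZMod.val_neg_one]
  exact Nat.lt_succ_iff.1 (ZMod.val_lt _)

theorem IsCCLabel.eq_uMatch_left (h : IsCCLabel T i l) (hij : i ≠ j) :
    l j = UMatch T {v | Btw j v i} := by
  let := cwOrder i
  have hi : IsBot i := isBot_cwOrder i
  have ht : IsTop (i - 1) := isTop_cwOrder i
  have hG := isTriangulation_edgeGraph T i
  have hlt : l (i - 1) = 1 := h.2.1 _ (.inr (.inl (sub_add_cancel i 1).symm))
  rw [uMatch_eq_numMatchings, ← hG.numMatchings_Ioi
    (fun x _ _ hc => h.eq_add_of_isTriangle hc (.inl (hi x))) hi ht h.1 hlt hij.symm]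
  congr! 2 with v
  have := hi v
  have := hi j
  rw [btw_iff_cwOrder i]
  grind

theorem IsCCLabel.eq_uMatch_right (h : IsCCLabel T i l) (hij : i ≠ j) :
    l j = UMatch T {v | Btw i v j} := by
  let := cwOrder (i + 1)
  have hi : IsTop i := add_sub_cancel_right i 1 ▸ isTop_cwOrder (i + 1)
  have hb : IsBot (i + 1) := isBot_cwOrder (i + 1)
  have hG := isTriangulation_edgeGraph T (i + 1)
  have hlb : l (i + 1) = 1 := h.2.1 _ (.inl rfl)
  rw [uMatch_eq_numMatchings, ← hG.numMatchings_Iio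
    (fun _ _ y hc => h.eq_add_of_isTriangle hc (.inr (hi y))) hb hi hlb h.1 hij.symm]
  congr! 2 with v
  have := hi v
  have := hi j
  rw [btw_iff_cwOrder (i + 1)]
  grind

end Cyclic

/-- **Broline–Crowe–Isaacs.** The Conway–Coxeter frieze entry
`(i,j)` of a triangulation `T` of the unpunctured disc equals the number of
matchings between `T` and the vertices strictly between `i` and `j` clockwise,
and also the number of matchings between `T` and the vertices strictly between
`j` and `i`; in particular `(i,j) = (j,i)`. -/
theorem broline_crowe_isaacs (N : ℕ) (hN : 3 ≤ N) [NeZero N] (T : Triang N)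
    (i j : Vx N) (hij : i ≠ j) (l l' : Vx N → ℕ)
    (h : IsCCLabel T i l) (h' : IsCCLabel T j l') :
    l j = UMatch T (Finset.univ.filter (fun v => Btw i v j)) ∧
    l j = UMatch T (Finset.univ.filter (fun v => Btw j v i)) ∧
    l j = l' i :=
  ⟨h.eq_uMatch_right hij, h.eq_uMatch_left hij,
    (h.eq_uMatch_left hij).trans (h'.eq_uMatch_right hij.symm).symm⟩

end Frieze
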